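/- For all positive integers x, y, m, n with x > y, if φ((x^m − y^m)/(x − y)) = (x^n − y^n)/(x − y), then m = 1 and n = 1. -/

import Mathlib

/-!
Write `Qₖ = (x ^ k - y ^ k) / (x - y)`. Since `Q` is increasing and `φ N < N` for `N > 1`, it is
enough to show that `φ Qₘ ∣ Qₙ` forces `m ≤ n`. A common factor `g` of `x` and `y` can be cancelled
because `φ (g ^ (j + 1) * M) = g ^ j * φ (g * M)`, so let `x` and `y` be coprime and suppose
`n < m`. Then `φ Qₘ ≤ Qₙ` and `x ^ (m - n) * Qₙ < Qₘ`, so the product of `1 + 1 / (p - 1)` over the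
primes `p ∣ Qₘ`, which is `Qₘ / φ Qₘ`, exceeds `x ^ (m - n)`. This is contradicted by bounding two
partial products by `x ^ ((m - n) / 2)` each.

* If `p ∣ x ^ n - y ^ n`, then also `p ∣ x ^ (m - n) - y ^ (m - n)`, and for `D ≥ 1` the square of
  the product over the prime factors of `D` is at most `D` as long as `2 ∣ D` implies `4 ∣ D`.
* For the other `p`, the order `r` of `x / y` modulo `p` divides `m` but not `n`, and also `p - 1`.
  So `p ≡ 1` modulo a prime `q ∣ r` with `v_q(n) < v_q(m)`. The valuations of `Qₘ` and `Qₙ` given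
  by lifting the exponent show that `q ∤ Qₘ`. Let `B` be the set of the `q` that occur. If `A`
  primes `p ∣ Qₘ` are `1` modulo `q`, then `q ^ A ∣ φ Qₘ ∣ x ^ n - y ^ n`, and lifting the exponent
  bounds `A` by `q * log (x ^ (m - n)) / 2`. Conversely primitive prime divisors (Zsigmondy) for the
  products of elements of `B` give `A ≥ 2 ^ (#B - 1)`, so `B` is small. As these `p - 1` are
  multiples of `2 * q`, comparison with a harmonic sum gives
  `∑ 1 / (p - 1) ≤ log (x ^ (m - n)) / 2`.
-/

open Finset

section CommSemiring

variable {R : Type*} [CommSemiring R]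

/-- The homogeneous geometric sum `x ^ (n - 1) + x ^ (n - 2) * y + ⋯ + y ^ (n - 1)`, that is, the
quotient of `x ^ n - y ^ n` by `x - y`, written so that it makes sense in a semiring. -/
def geomSum₂ (x y : R) (n : ℕ) : R := ∑ i ∈ range n, x ^ i * y ^ (n - 1 - i)

lemma geomSum₂_zero (x y : R) : geomSum₂ x y 0 = 0 := sum_range_zero _

lemma geomSum₂_one (x y : R) : geomSum₂ x y 1 = 1 := by simp [geomSum₂]

lemma geomSum₂_add (x y : R) (a b : ℕ) :
    geomSum₂ x y (a + b) = y ^ b * geomSum₂ x y a + x ^ a * geomSum₂ x y b := by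
  rw [geomSum₂, sum_range_add, geomSum₂, geomSum₂, mul_sum, mul_sum]
  congr 1 <;> refine sum_congr rfl fun i hi => ?_
  · rw [show a + b - 1 - i = b + (a - 1 - i) by have := mem_range.1 hi; omega]
    ring
  · rw [show a + b - 1 - (a + i) = b - 1 - i by omega]
    ring

lemma geomSum₂_dvd_geomSum₂ (x y : R) {d m : ℕ} (h : d ∣ m) : geomSum₂ x y d ∣ geomSum₂ x y m := by
  obtain ⟨c, rfl⟩ := h
  induction c with
  | zero => simp [geomSum₂_zero]
  | succ c ih =>
    rw [mul_add_one, geomSum₂_add]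
    exact dvd_add (ih.mul_left _) (dvd_mul_left _ _)

lemma geomSum₂_mul_mul (g x y : R) (m : ℕ) :
    geomSum₂ (g * x) (g * y) m = g ^ (m - 1) * geomSum₂ x y m := by
  rw [geomSum₂, geomSum₂, mul_sum]
  refine sum_congr rfl fun i hi => ?_
  rw [← Nat.add_sub_of_le (Nat.le_sub_one_of_lt (mem_range.1 hi)), Nat.add_sub_cancel_left]
  ring

end CommSemiring

variable {x y : ℕ}

lemma pow_sub_pow_div_sub_eq_geomSum₂ (hxy : y < x) (m : ℕ) :
    (x ^ m - y ^ m) / (x - y) = geomSum₂ x y m :=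
  Nat.div_eq_of_eq_mul_left (Nat.sub_pos_of_lt hxy) (geom_sum₂_mul_of_ge hxy.le m).symm

lemma geomSum₂_pos {m : ℕ} (hx : 0 < x) (hm : 0 < m) : 0 < geomSum₂ x y m := by
  have hterm : x ^ (m - 1) * y ^ (m - 1 - (m - 1)) ≤ geomSum₂ x y m :=
    single_le_sum (f := fun i => x ^ i * y ^ (m - 1 - i)) (fun _ _ => Nat.zero_le _)
      (mem_range.2 (Nat.sub_one_lt hm.ne'))
  rw [Nat.sub_self, pow_zero, mul_one] at hterm
  exact (Nat.pow_pos hx).trans_le hterm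

lemma pow_mul_geomSum₂_lt_geomSum₂ {m n : ℕ} (hx : 0 < x) (hy : 0 < y) (hnm : n < m) :
    x ^ (m - n) * geomSum₂ x y n < geomSum₂ x y m := by
  have hsplit := geomSum₂_add x y (m - n) n
  rw [Nat.sub_add_cancel hnm.le] at hsplit
  have : 0 < y ^ n * geomSum₂ x y (m - n) :=
    Nat.mul_pos (Nat.pow_pos hy) (geomSum₂_pos hx (Nat.sub_pos_of_lt hnm))
  omega

lemma geomSum₂_strictMono (hx : 0 < x) (hy : 0 < y) : StrictMono (geomSum₂ x y) := fun _ _ h =>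
  (Nat.le_mul_of_pos_left _ (Nat.pow_pos hx)).trans_lt (pow_mul_geomSum₂_lt_geomSum₂ hx hy h)

lemma natCast_geomSum₂_mul_sub {R : Type*} [CommRing R] (x y m : ℕ) :
    ((geomSum₂ x y m : ℕ) : R) * (x - y) = x ^ m - y ^ m := by
  rw [← geom_sum₂_mul, geomSum₂]
  push_cast
  rfl

lemma pow_modEq_pow_of_dvd_geomSum₂ {d m : ℕ} (h : d ∣ geomSum₂ x y m) :
    x ^ m ≡ y ^ m [MOD d] := by
  have key := natCast_geomSum₂_mul_sub (R := ZMod d) x y m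
  rw [(ZMod.natCast_eq_zero_iff _ _).2 h, zero_mul] at key
  rw [← ZMod.natCast_eq_natCast_iff]
  push_cast
  exact sub_eq_zero.1 key.symm

lemma dvd_geomSum₂_of_pow_modEq_pow {p m : ℕ} (hp : p.Prime) (hm : x ^ m ≡ y ^ m [MOD p])
    (hne : ¬ x ≡ y [MOD p]) : p ∣ geomSum₂ x y m := by
  have := Fact.mk hp
  rw [← ZMod.natCast_eq_natCast_iff] at hm hne
  push_cast at hm
  have key := natCast_geomSum₂_mul_sub (R := ZMod p) x y m
  rw [hm, sub_self] at key
  exact (ZMod.natCast_eq_zero_iff _ _).1 ((mul_eq_zero.1 key).resolve_right (sub_ne_zero.2 hne))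

lemma dvd_geomSum₂_iff_dvd {p m : ℕ} (hp : p.Prime) (hxy : x ≡ y [MOD p]) (hy : ¬ p ∣ y) :
    p ∣ geomSum₂ x y m ↔ p ∣ m := by
  have key := dvd_geom_sum₂_iff_of_dvd_sub (n := m)
    ((Nat.modEq_iff_dvd (n := p)).1 hxy.symm)
  rw [show ∑ i ∈ range m, (x : ℤ) ^ i * (y : ℤ) ^ (m - 1 - i) = (geomSum₂ x y m : ℕ) by
    simp [geomSum₂]] at key
  norm_cast at key
  rw [key, hp.dvd_mul, or_iff_left fun h => hy (hp.dvd_of_dvd_pow h)]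

lemma not_dvd_left_of_pow_modEq_pow {p m : ℕ} (hp : p.Prime) (hc : x.Coprime y) (hm : m ≠ 0)
    (h : x ^ m ≡ y ^ m [MOD p]) : ¬ p ∣ x := fun hpx =>
  Nat.not_coprime_of_dvd_of_dvd hp.one_lt hpx
    (hp.dvd_of_dvd_pow ((h.dvd_iff dvd_rfl).1 (dvd_pow hpx hm))) hc

lemma not_dvd_right_of_pow_modEq_pow {p m : ℕ} (hp : p.Prime) (hc : x.Coprime y) (hm : m ≠ 0)
    (h : x ^ m ≡ y ^ m [MOD p]) : ¬ p ∣ y :=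
  not_dvd_left_of_pow_modEq_pow hp hc.symm hm h.symm

lemma odd_of_two_dvd_geomSum₂ {n : ℕ} (hc : x.Coprime y) (hn : n ≠ 0) (h : 2 ∣ geomSum₂ x y n) :
    Odd x ∧ Odd y := by
  have hpow := pow_modEq_pow_of_dvd_geomSum₂ h
  have hx := not_dvd_left_of_pow_modEq_pow Nat.prime_two hc hn hpow
  have hy := not_dvd_right_of_pow_modEq_pow Nat.prime_two hc hn hpow
  rw [← even_iff_two_dvd, Nat.not_even_iff_odd] at hx hy
  exact ⟨hx, hy⟩

lemma two_dvd_geomSum₂_iff {n : ℕ} (hx : Odd x) (hy : Odd y) : 2 ∣ geomSum₂ x y n ↔ 2 ∣ n :=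
  dvd_geomSum₂_iff_dvd Nat.prime_two ((Nat.odd_iff.1 hx).trans (Nat.odd_iff.1 hy).symm)
    hy.not_two_dvd_nat

/-- The rank of apparition of `p` in the sequence `x ^ n - y ^ n`: the order of `x / y` modulo `p`.
It is meaningful for primes `p` not dividing `y`. -/
noncomputable def rankOfApparition (x y p : ℕ) : ℕ := orderOf ((x : ZMod p) * (y : ZMod p)⁻¹)

lemma rankOfApparition_dvd_iff {p : ℕ} (hp : p.Prime) (hy : ¬ p ∣ y) (r : ℕ) :
    rankOfApparition x y p ∣ r ↔ x ^ r ≡ y ^ r [MOD p] := by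
  have := Fact.mk hp
  have hy0 : (y : ZMod p) ≠ 0 := by rwa [Ne, ZMod.natCast_eq_zero_iff]
  rw [rankOfApparition, orderOf_dvd_iff_pow_eq_one, ← div_eq_mul_inv, div_pow,
    div_eq_one_iff_eq (pow_ne_zero _ hy0), ← ZMod.natCast_eq_natCast_iff]
  push_cast
  rfl

lemma rankOfApparition_dvd_sub_one {p : ℕ} (hp : p.Prime) (hx : ¬ p ∣ x) (hy : ¬ p ∣ y) :
    rankOfApparition x y p ∣ p - 1 := by
  have := Fact.mk hp
  refine ZMod.orderOf_dvd_card_sub_one (mul_ne_zero ?_ (inv_ne_zero ?_)) <;>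
    rwa [Ne, ZMod.natCast_eq_zero_iff]

lemma pow_sub_one_modEq_pow_sub_one {p : ℕ} (hp : p.Prime) (hx : ¬ p ∣ x) (hy : ¬ p ∣ y) :
    x ^ (p - 1) ≡ y ^ (p - 1) [MOD p] :=
  (rankOfApparition_dvd_iff hp hy _).1 (rankOfApparition_dvd_sub_one hp hx hy)

section HomogCyclotomic

open Polynomial

/-- The homogenized cyclotomic polynomial `y ^ φ e * Φₑ(x / y)`, evaluated at integers. -/
noncomputable def homogCyclotomic (e : ℕ) (x y : ℤ) : ℤ := ((cyclotomic e ℤ).scaleRoots y).eval x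

lemma intCast_homogCyclotomic {R : Type*} [CommRing R] [Nontrivial R] (e : ℕ) (x y : ℤ) :
    (homogCyclotomic e x y : R) = ((cyclotomic e R).scaleRoots (y : R)).eval (x : R) := by
  have hmap := map_scaleRoots (cyclotomic e ℤ) y (Int.castRingHom R)
    (by simp [(cyclotomic.monic e ℤ).leadingCoeff])
  rw [map_cyclotomic] at hmap
  change _ = eval _ ((cyclotomic e R).scaleRoots (Int.castRingHom R y))
  rw [← hmap, eval_map]
  exact (eval₂_at_apply (Int.castRingHom R) x).symm

lemma homogCyclotomic_eq_pow_mul_eval {K : Type*} [Field K] (e : ℕ) (x : ℤ) {y : ℤ}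
    (hy : (y : K) ≠ 0) :
    (homogCyclotomic e x y : K) = y ^ e.totient * (cyclotomic e K).eval (x / y : K) := by
  have h := scaleRoots_eval₂_mul (p := cyclotomic e K) (RingHom.id K) (x / y : K) (y : K)
  rw [RingHom.id_apply, mul_div_cancel₀ _ hy, natDegree_cyclotomic, eval₂_id, eval₂_id] at h
  rw [intCast_homogCyclotomic, h]

lemma homogCyclotomic_eq_pow {R : Type*} [CommRing R] [Nontrivial R] (e : ℕ) (x : ℤ) {y : ℤ}
    (hy : (y : R) = 0) : (homogCyclotomic e x y : R) = x ^ e.totient := by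
  rw [intCast_homogCyclotomic, hy, scaleRoots_zero, (cyclotomic.monic e R).leadingCoeff, one_smul,
    natDegree_cyclotomic, eval_pow, eval_X]

lemma one_lt_homogCyclotomic {e : ℕ} (he : 2 ≤ e) {x y : ℤ} (hy : 0 < y) (hxy : y < x) :
    1 < homogCyclotomic e x y := by
  have hyR : (0 : ℝ) < y := by exact_mod_cast hy
  have hxyR : (y : ℝ) + 1 ≤ x := by exact_mod_cast hxy
  have hsub : (1 : ℝ) ≤ y * (x / y - 1) := by
    rw [mul_sub, mul_div_cancel₀ _ hyR.ne']
    linarith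
  have hlt := sub_one_pow_totient_lt_cyclotomic_eval he
    ((one_lt_div hyR).2 (by linarith : (y : ℝ) < x))
  have : (1 : ℝ) < homogCyclotomic e x y := by
    rw [homogCyclotomic_eq_pow_mul_eval e x hyR.ne']
    calc (1 : ℝ) ≤ (y * (x / y - 1)) ^ e.totient := one_le_pow₀ hsub
      _ = y ^ e.totient * (x / y - 1 : ℝ) ^ e.totient := mul_pow _ _ _
      _ < _ := mul_lt_mul_of_pos_left hlt (by positivity)
  exact_mod_cast this

lemma not_dvd_of_dvd_homogCyclotomic {p e : ℕ} (hp : p.Prime) (hc : x.Coprime y)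
    (h : (p : ℤ) ∣ homogCyclotomic e x y) : ¬ p ∣ y := by
  intro hpy
  have := Fact.mk hp
  have hy : (((y : ℤ) : ZMod p)) = 0 := by
    rwa [Int.cast_natCast, ZMod.natCast_eq_zero_iff]
  rw [← ZMod.intCast_zmod_eq_zero_iff_dvd, homogCyclotomic_eq_pow e _ hy] at h
  have hx := eq_zero_of_pow_eq_zero h
  rw [Int.cast_natCast, ZMod.natCast_eq_zero_iff] at hx
  exact Nat.not_coprime_of_dvd_of_dvd hp.one_lt hx hpy hc

lemma isRoot_cyclotomic_of_dvd_homogCyclotomic {p e : ℕ} [Fact p.Prime] (hy : ¬ p ∣ y)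
    (h : (p : ℤ) ∣ homogCyclotomic e x y) :
    (cyclotomic e (ZMod p)).IsRoot ((x : ZMod p) * (y : ZMod p)⁻¹) := by
  have hy0 : ((y : ℤ) : ZMod p) ≠ 0 := by rwa [Int.cast_natCast, Ne, ZMod.natCast_eq_zero_iff]
  rw [← ZMod.intCast_zmod_eq_zero_iff_dvd, homogCyclotomic_eq_pow_mul_eval e _ hy0] at h
  simpa [div_eq_mul_inv] using (mul_eq_zero.1 h).resolve_left (pow_ne_zero _ hy0)

lemma rankOfApparition_eq_of_dvd_homogCyclotomic {p e : ℕ} (hp : p.Prime) (hy : ¬ p ∣ y)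
    (hpe : ¬ p ∣ e) (h : (p : ℤ) ∣ homogCyclotomic e x y) : rankOfApparition x y p = e := by
  have := Fact.mk hp
  have : NeZero (e : ZMod p) := ⟨by rwa [Ne, ZMod.natCast_eq_zero_iff]⟩
  exact (isRoot_cyclotomic_iff.1
    (isRoot_cyclotomic_of_dvd_homogCyclotomic hy h)).eq_orderOf.symm

lemma pow_modEq_pow_of_dvd_homogCyclotomic {p e : ℕ} (hp : p.Prime) (hy : ¬ p ∣ y)
    (h : (p : ℤ) ∣ homogCyclotomic e x y) : x ^ e ≡ y ^ e [MOD p] := by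
  have := Fact.mk hp
  have hroot := (isRoot_cyclotomic_of_dvd_homogCyclotomic hy h).dvd
    (cyclotomic.dvd_X_pow_sub_one e (ZMod p))
  rw [← rankOfApparition_dvd_iff hp hy]
  exact orderOf_dvd_of_pow_eq_one (by simpa [sub_eq_zero] using hroot)

lemma exists_prime_rankOfApparition_eq {e : ℕ} (hy : 0 < y) (hxy : y < x) (hc : x.Coprime y)
    (he : 2 ≤ e) (hcop : (geomSum₂ x y e).Coprime e) :
    ∃ p, p.Prime ∧ p ∣ geomSum₂ x y e ∧ rankOfApparition x y p = e := by
  have hone := one_lt_homogCyclotomic he (x := x) (y := y) (by exact_mod_cast hy)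
    (by exact_mod_cast hxy)
  obtain ⟨p, hp, hpF⟩ := Nat.exists_prime_and_dvd (n := (homogCyclotomic e x y).natAbs) (by omega)
  rw [← Int.natCast_dvd] at hpF
  have hpy := not_dvd_of_dvd_homogCyclotomic hp hc hpF
  have hpow := pow_modEq_pow_of_dvd_homogCyclotomic hp hpy hpF
  have hpe : ¬ p ∣ e := by
    intro hpe
    refine Nat.not_coprime_of_dvd_of_dvd hp.one_lt ?_ hpe hcop
    by_cases hxy' : x ≡ y [MOD p]
    · exact (dvd_geomSum₂_iff_dvd hp hxy' hpy).2 hpe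
    · exact dvd_geomSum₂_of_pow_modEq_pow hp hpow hxy'
  have hrank := rankOfApparition_eq_of_dvd_homogCyclotomic hp hpy hpe hpF
  refine ⟨p, hp, dvd_geomSum₂_of_pow_modEq_pow hp hpow fun h => ?_, hrank⟩
  have hdvd : rankOfApparition x y p ∣ 1 :=
    (rankOfApparition_dvd_iff hp hpy 1).2 (by rwa [pow_one, pow_one])
  rw [hrank, Nat.dvd_one] at hdvd
  omega

end HomogCyclotomic

/-- The prime factors `p` of `N` with `p ≡ 1 [MOD q]`. -/
def primeFactorsOneMod (q N : ℕ) : Finset ℕ := {p ∈ N.primeFactors | q ∣ p - 1}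

lemma mem_primeFactorsOneMod {q N p : ℕ} :
    p ∈ primeFactorsOneMod q N ↔ p ∈ N.primeFactors ∧ q ∣ p - 1 := mem_filter

lemma prod_dvd_of_subset_primeFactors {m : ℕ} {F : Finset ℕ} (hF : F ⊆ m.primeFactors) :
    ∏ q ∈ F, q ∣ m :=
  (prod_dvd_prod_of_subset _ _ _ hF).trans (Nat.prod_primeFactors_dvd m)

/-- Every `F` with `q₀ ∈ F ⊆ B` gives a prime of rank `∏ q ∈ F, q`, and the rank determines `F`. -/
lemma two_pow_card_sub_one_le_card_primeFactorsOneMod {m q₀ : ℕ} {B : Finset ℕ} (hy : 0 < y)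
    (hxy : y < x) (hc : x.Coprime y) (hm : 0 < m) (hBm : B ⊆ m.primeFactors)
    (hB : ∀ q ∈ B, ¬ q ∣ geomSum₂ x y m) (hq₀ : q₀ ∈ B) :
    2 ^ (#B - 1) ≤ #(primeFactorsOneMod q₀ (geomSum₂ x y m)) := by
  have hprime : ∀ q ∈ B, q.Prime := fun q hq => Nat.prime_of_mem_primeFactors (hBm hq)
  have hrank : ∀ F ∈ Icc {q₀} B, ∃ p ∈ primeFactorsOneMod q₀ (geomSum₂ x y m),
      rankOfApparition x y p = ∏ q ∈ F, q := by
    intro F hF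
    obtain ⟨hq₀F, hFB⟩ := mem_Icc.1 hF
    have hFm := prod_dvd_of_subset_primeFactors (hFB.trans hBm)
    have hq₀dvd : q₀ ∣ ∏ q ∈ F, q := dvd_prod_of_mem _ (singleton_subset_iff.1 hq₀F)
    have hdvd := geomSum₂_dvd_geomSum₂ x y hFm
    have hcop : (geomSum₂ x y (∏ q ∈ F, q)).Coprime (∏ q ∈ F, q) :=
      Nat.Coprime.prod_right fun q hq => (((hprime q (hFB hq)).coprime_iff_not_dvd.2
        fun h => hB q (hFB hq) (h.trans hdvd)).symm)
    obtain ⟨p, hp, hpdvd, hpF⟩ := exists_prime_rankOfApparition_eq hy hxy hc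
      ((hprime q₀ hq₀).two_le.trans (Nat.le_of_dvd (Nat.pos_of_dvd_of_pos hFm hm) hq₀dvd)) hcop
    have hpm := hpdvd.trans hdvd
    have hpow := pow_modEq_pow_of_dvd_geomSum₂ hpm
    refine ⟨p, mem_primeFactorsOneMod.2 ⟨?_, ?_⟩, hpF⟩
    · exact Nat.mem_primeFactors.2 ⟨hp, hpm, (geomSum₂_pos (hy.trans hxy) hm).ne'⟩
    · exact (hpF ▸ hq₀dvd).trans (rankOfApparition_dvd_sub_one hp
        (not_dvd_left_of_pow_modEq_pow hp hc hm.ne' hpow)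
        (not_dvd_right_of_pow_modEq_pow hp hc hm.ne' hpow))
  choose! f hf hfrank using hrank
  rw [← card_singleton q₀, ← card_Icc_finset (singleton_subset_iff.2 hq₀)]
  refine card_le_card_of_injOn f hf fun F hF G hG hFG => ?_
  rw [← Nat.primeFactors_prod fun q hq => hprime q ((mem_Icc.1 hF).2 hq), ← hfrank F hF, hFG,
    hfrank G hG, Nat.primeFactors_prod fun q hq => hprime q ((mem_Icc.1 hG).2 hq)]

section Valuation

lemma pow_padicValNat_le_sub {q m n : ℕ} (hnm : n < m) (hv : padicValNat q n ≤ padicValNat q m) :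
    q ^ padicValNat q n ≤ m - n :=
  Nat.le_of_dvd (Nat.sub_pos_of_lt hnm)
    (Nat.dvd_sub ((pow_dvd_pow q hv).trans pow_padicValNat_dvd) pow_padicValNat_dvd)

variable {q m n : ℕ} [Fact q.Prime]

lemma padicValNat_geomSum₂_add_padicValNat_sub (hxy : y < x) (hm : m ≠ 0) :
    padicValNat q (geomSum₂ x y m) + padicValNat q (x - y) = padicValNat q (x ^ m - y ^ m) := by
  rw [← padicValNat.mul (geomSum₂_pos (Nat.zero_lt_of_lt hxy) (Nat.pos_of_ne_zero hm)).ne'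
    (Nat.sub_ne_zero_of_lt hxy)]
  exact congrArg _ (geom_sum₂_mul_of_ge hxy.le m)

lemma padicValNat_two_geomSum₂ (hxy : y < x) (hx : Odd x) (hy : Odd y) (hn : n ≠ 0)
    (hne : Even n) :
    padicValNat 2 (geomSum₂ x y n) + 1 = padicValNat 2 (x + y) + padicValNat 2 n := by
  have hlte := padicValNat.pow_two_sub_pow hxy (hx.tsub_odd hy).two_dvd hx.not_two_dvd_nat hn hne
  have := padicValNat_geomSum₂_add_padicValNat_sub (q := 2) hxy hn
  omega

lemma padicValNat_pow_sub_pow_add_of_dvd (hq : Odd q) (hxy : y < x) (hqx : ¬ q ∣ x) {d : ℕ}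
    (hd : x ^ d ≡ y ^ d [MOD q]) (hdm : d ∣ m) (hm : m ≠ 0) :
    padicValNat q (x ^ m - y ^ m) + padicValNat q d =
      padicValNat q (x ^ d - y ^ d) + padicValNat q m := by
  obtain ⟨a, rfl⟩ := hdm
  obtain ⟨hd0, ha0⟩ := mul_ne_zero_iff.1 hm
  have hlt : y ^ d < x ^ d := Nat.pow_lt_pow_left hxy hd0
  have hlte := padicValNat.pow_sub_pow hq hlt ((Nat.modEq_iff_dvd' hlt.le).1 hd.symm)
    (fun h => hqx ((Fact.out : q.Prime).dvd_of_dvd_pow h)) ha0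
  rw [← pow_mul, ← pow_mul] at hlte
  rw [padicValNat.mul hd0 ha0]
  omega

lemma padicValNat_geomSum₂_add_padicValNat (hxy : y < x) (hc : x.Coprime y) (hm : m ≠ 0)
    (hn : n ≠ 0) (hqm : q ∣ geomSum₂ x y m) (hqn : q ∣ geomSum₂ x y n) :
    padicValNat q (geomSum₂ x y m) + padicValNat q n =
      padicValNat q (geomSum₂ x y n) + padicValNat q m := by
  have hq : q.Prime := Fact.out
  rcases hq.eq_two_or_odd' with rfl | hodd
  · obtain ⟨hx, hy⟩ := odd_of_two_dvd_geomSum₂ hc hm hqm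
    have hvm := padicValNat_two_geomSum₂ hxy hx hy hm
      (even_iff_two_dvd.2 ((two_dvd_geomSum₂_iff hx hy).1 hqm))
    have hvn := padicValNat_two_geomSum₂ hxy hx hy hn
      (even_iff_two_dvd.2 ((two_dvd_geomSum₂_iff hx hy).1 hqn))
    omega
  · have hpm := pow_modEq_pow_of_dvd_geomSum₂ hqm
    have hpn := pow_modEq_pow_of_dvd_geomSum₂ hqn
    have hqx := not_dvd_left_of_pow_modEq_pow hq hc hm hpm
    have hqy := not_dvd_right_of_pow_modEq_pow hq hc hm hpm
    have hgcd : x ^ m.gcd n ≡ y ^ m.gcd n [MOD q] := by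
      rw [← rankOfApparition_dvd_iff hq hqy] at hpm hpn ⊢
      exact Nat.dvd_gcd hpm hpn
    have hvm := padicValNat_pow_sub_pow_add_of_dvd hodd hxy hqx hgcd (Nat.gcd_dvd_left m n) hm
    have hvn := padicValNat_pow_sub_pow_add_of_dvd hodd hxy hqx hgcd (Nat.gcd_dvd_right m n) hn
    have := padicValNat_geomSum₂_add_padicValNat_sub (q := q) hxy hm
    have := padicValNat_geomSum₂_add_padicValNat_sub (q := q) hxy hn
    omega

lemma padicValNat_pow_sub_pow_le (hq : Odd q) (hxy : y < x) (hqx : ¬ q ∣ x) (hqy : ¬ q ∣ y)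
    (hn : n ≠ 0) :
    padicValNat q (x ^ n - y ^ n) ≤
      padicValNat q (x ^ (q - 1) - y ^ (q - 1)) + padicValNat q n := by
  have hp : q.Prime := Fact.out
  have hlt : y ^ (q - 1) < x ^ (q - 1) := Nat.pow_lt_pow_left hxy (Nat.sub_ne_zero_of_lt hp.one_lt)
  rw [← padicValNat.pow_sub_pow hq hlt
    ((Nat.modEq_iff_dvd' hlt.le).1 (pow_sub_one_modEq_pow_sub_one hp hqx hqy).symm)
    (fun h => hqx (hp.dvd_of_dvd_pow h)) hn]
  refine (padicValNat_dvd_iff_le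
    (Nat.sub_ne_zero_of_lt (Nat.pow_lt_pow_left hlt hn))).1 (pow_padicValNat_dvd.trans ?_)
  rw [← pow_mul, ← pow_mul, mul_comm, pow_mul, pow_mul]
  exact Nat.sub_dvd_pow_sub_pow _ _ _

lemma pow_padicValNat_sq_sub_sq_le {a b : ℕ} (hq : Odd q) (hba : b < a) (hab : Even (a + b))
    (hqa : ¬ q ∣ a) : q ^ padicValNat q (a ^ 2 - b ^ 2) ≤ a := by
  have hp : q.Prime := Fact.out
  have hdvd : q ^ padicValNat q (a ^ 2 - b ^ 2) ∣ (a + b) * (a - b) :=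
    Nat.sq_sub_sq a b ▸ pow_padicValNat_dvd
  by_cases hd : q ∣ a + b
  · have hnd : ¬ q ∣ a - b := fun h => by
      have h2a : q ∣ 2 * a := by
        rw [show 2 * a = a + b + (a - b) by omega]
        exact dvd_add hd h
      exact hqa ((Nat.Coprime.dvd_mul_left (Nat.coprime_two_right.2 hq)).1 h2a)
    have hadd := hp.prime.pow_dvd_of_dvd_mul_right _ hnd hdvd
    obtain ⟨c, hc⟩ := hab
    rw [hc, ← two_mul, Nat.Coprime.dvd_mul_left (Nat.coprime_two_right.2 hq.pow)] at hadd
    have := Nat.le_of_dvd (by omega) hadd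
    omega
  · have hsub := hp.prime.pow_dvd_of_dvd_mul_left _ hd hdvd
    exact (Nat.le_of_dvd (Nat.sub_pos_of_lt hba) hsub).trans (Nat.sub_le _ _)

lemma pow_padicValNat_pow_sub_one_sub_le (hq : Odd q) (hxy : y < x) (hx : Odd x) (hy : Odd y)
    (hqx : ¬ q ∣ x) : q ^ padicValNat q (x ^ (q - 1) - y ^ (q - 1)) ≤ x ^ ((q - 1) / 2) := by
  have hp : q.Prime := Fact.out
  obtain ⟨h, hh⟩ := hq
  have hsq : q - 1 = h * 2 := by omega
  have hh0 : h ≠ 0 := by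
    rintro rfl
    exact hp.one_lt.ne' hh
  rw [hsq, Nat.mul_div_cancel _ two_pos, pow_mul, pow_mul]
  exact pow_padicValNat_sq_sub_sq_le ⟨h, by omega⟩ (Nat.pow_lt_pow_left hxy hh0)
    (hx.pow.add_odd hy.pow) fun hd => hqx (hp.dvd_of_dvd_pow hd)

lemma pow_le_pow_of_pow_dvd_pow_sub_pow (hq : Odd q) (hxy : y < x) (hc : x.Coprime y)
    (hx : Odd x) (hy : Odd y) (hn : n ≠ 0) (hnm : n < m)
    (hv : padicValNat q n ≤ padicValNat q m) {A : ℕ} (hA : q ^ A ∣ x ^ n - y ^ n) :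
    q ^ A ≤ (x ^ (m - n)) ^ ((q - 1) / 2) := by
  have hp : q.Prime := Fact.out
  obtain ⟨h, hh⟩ := id hq
  obtain ⟨k, hk⟩ : ∃ k, m - n = k + 1 := ⟨m - n - 1, by omega⟩
  have hp2 := hp.two_le
  have hy0 := hy.pos
  rcases eq_or_ne A 0 with rfl | hA0
  · exact (pow_zero q).trans_le (Nat.one_le_pow _ _ (Nat.pow_pos (by omega)))
  have hlt : y ^ n < x ^ n := Nat.pow_lt_pow_left hxy hn
  have hmod := ((Nat.modEq_iff_dvd' hlt.le).2 ((dvd_pow_self q hA0).trans hA)).symm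
  have hqx := not_dvd_left_of_pow_modEq_pow hp hc hn hmod
  have hqy := not_dvd_right_of_pow_modEq_pow hp hc hn hmod
  have hAle : A ≤ padicValNat q (x ^ (q - 1) - y ^ (q - 1)) + padicValNat q n :=
    ((padicValNat_dvd_iff_le (Nat.sub_ne_zero_of_lt hlt)).1 hA).trans
      (padicValNat_pow_sub_pow_le hq hxy hqx hqy hn)
  have hkx : q ^ padicValNat q n ≤ x ^ (k * ((q - 1) / 2)) :=
    calc q ^ padicValNat q n ≤ k + 1 := hk ▸ pow_padicValNat_le_sub hnm hv
      _ ≤ x ^ k := Nat.lt_pow_self (by omega)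
      _ ≤ x ^ (k * ((q - 1) / 2)) :=
        Nat.pow_le_pow_right (by omega) (Nat.le_mul_of_pos_right _ (by omega))
  calc q ^ A ≤ q ^ padicValNat q (x ^ (q - 1) - y ^ (q - 1)) * q ^ padicValNat q n :=
        (Nat.pow_le_pow_right hp.pos hAle).trans_eq (pow_add _ _ _)
    _ ≤ x ^ ((q - 1) / 2) * x ^ (k * ((q - 1) / 2)) :=
        Nat.mul_le_mul (pow_padicValNat_pow_sub_one_sub_le hq hxy hx hy hqx) hkx
    _ = (x ^ (m - n)) ^ ((q - 1) / 2) := by rw [hk]; ring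

end Valuation

section Totient

variable {q m n p : ℕ}

lemma pow_card_primeFactorsOneMod_dvd (q N : ℕ) :
    q ^ #(primeFactorsOneMod q N) ∣ ∏ p ∈ N.primeFactors, (p - 1) := by
  rw [← prod_const]
  exact (prod_dvd_prod_of_dvd _ _ fun p hp => (mem_primeFactorsOneMod.1 hp).2).trans
    (prod_dvd_prod_of_subset _ _ _ (filter_subset _ _))

lemma pow_padicValNat_sub_one_add_card_dvd_totient {N : ℕ} (hq : q.Prime) (hN : N ≠ 0) :
    q ^ (padicValNat q N - 1 + #(primeFactorsOneMod q N)) ∣ N.totient := by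
  rw [Nat.totient_eq_prod_factorization hN, Finsupp.prod_mul, pow_add]
  refine mul_dvd_mul ?_ (pow_card_primeFactorsOneMod_dvd q N)
  by_cases hqN : q ∈ N.factorization.support
  · rw [← Nat.factorization_def N hq]
    exact dvd_prod_of_mem (fun p => p ^ (N.factorization p - 1)) hqN
  · rw [Finsupp.notMem_support_iff, Nat.factorization_def N hq] at hqN
    rw [hqN, Nat.zero_sub, pow_zero]
    exact one_dvd _

lemma padicValNat_le_of_totient_geomSum₂_dvd (hq : q.Prime) (hxy : y < x) (hc : x.Coprime y)
    (hm : m ≠ 0) (hn : n ≠ 0) (hdvd : (geomSum₂ x y m).totient ∣ geomSum₂ x y n)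
    (hqm : q ∣ geomSum₂ x y m) (hP : (primeFactorsOneMod q (geomSum₂ x y m)).Nonempty) :
    padicValNat q m ≤ padicValNat q n := by
  have := Fact.mk hq
  have hx := Nat.zero_lt_of_lt hxy
  have hcard := hP.card_pos
  have hpow := (pow_padicValNat_sub_one_add_card_dvd_totient hq
    (geomSum₂_pos hx (Nat.pos_of_ne_zero hm)).ne').trans hdvd
  have hle := (padicValNat_dvd_iff_le (geomSum₂_pos hx (Nat.pos_of_ne_zero hn)).ne').1 hpow
  have := padicValNat_geomSum₂_add_padicValNat hxy hc hm hn hqm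
    ((dvd_pow_self q (by omega)).trans hpow)
  omega

/-- The primes `q` dividing `m` to a higher power than `n`, but not dividing
`(x ^ m - y ^ m) / (x - y)`. -/
def escapingPrimes (x y m n : ℕ) : Finset ℕ :=
  {q ∈ m.primeFactors | padicValNat q n < padicValNat q m ∧ ¬ q ∣ geomSum₂ x y m}

lemma mem_escapingPrimes : q ∈ escapingPrimes x y m n ↔ q ∈ m.primeFactors ∧
    padicValNat q n < padicValNat q m ∧ ¬ q ∣ geomSum₂ x y m := mem_filter

lemma exists_prime_padicValNat_lt_of_dvd {r : ℕ} (hm : m ≠ 0) (hn : n ≠ 0) (hrm : r ∣ m)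
    (hrn : ¬ r ∣ n) : ∃ q, q.Prime ∧ q ∣ r ∧ padicValNat q n < padicValNat q m := by
  have hr : r ≠ 0 := ne_zero_of_dvd_ne_zero hm hrm
  rw [← Nat.factorization_prime_le_iff_dvd hr hn] at hrn
  push Not at hrn
  obtain ⟨q, hq, hlt⟩ := hrn
  have hle := (Nat.factorization_prime_le_iff_dvd hr hm).2 hrm q hq
  refine ⟨q, hq, Nat.dvd_of_factorization_pos (by omega), ?_⟩
  rw [← Nat.factorization_def n hq, ← Nat.factorization_def m hq]
  exact hlt.trans_le hle

lemma exists_mem_escapingPrimes (hxy : y < x) (hc : x.Coprime y) (hm : m ≠ 0) (hn : n ≠ 0)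
    (hdvd : (geomSum₂ x y m).totient ∣ geomSum₂ x y n)
    (hp : p ∈ (geomSum₂ x y m).primeFactors) (hpn : ¬ x ^ n ≡ y ^ n [MOD p]) :
    ∃ q ∈ escapingPrimes x y m n, p ∈ primeFactorsOneMod q (geomSum₂ x y m) := by
  obtain ⟨hpp, hpm, -⟩ := Nat.mem_primeFactors.1 hp
  have hpow := pow_modEq_pow_of_dvd_geomSum₂ hpm
  have hpx := not_dvd_left_of_pow_modEq_pow hpp hc hm hpow
  have hpy := not_dvd_right_of_pow_modEq_pow hpp hc hm hpow
  rw [← rankOfApparition_dvd_iff hpp hpy] at hpow hpn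
  obtain ⟨q, hq, hqr, hv⟩ := exists_prime_padicValNat_lt_of_dvd hm hn hpow hpn
  have hpq : p ∈ primeFactorsOneMod q (geomSum₂ x y m) :=
    mem_primeFactorsOneMod.2 ⟨hp, hqr.trans (rankOfApparition_dvd_sub_one hpp hpx hpy)⟩
  refine ⟨q, mem_escapingPrimes.2 ⟨Nat.mem_primeFactors.2 ⟨hq, hqr.trans hpow, hm⟩, hv, ?_⟩, hpq⟩
  exact fun hqm =>
    hv.not_ge (padicValNat_le_of_totient_geomSum₂_dvd hq hxy hc hm hn hdvd hqm ⟨p, hpq⟩)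

end Totient

section EulerProduct

lemma totient_mul_prod_one_add_inv (N : ℕ) :
    (N.totient : ℝ) * ∏ p ∈ N.primeFactors, (1 + ((p - 1 : ℕ) : ℝ)⁻¹) = N := by
  have hpos : ∀ p ∈ N.primeFactors, 0 < p - 1 := fun p hp =>
    Nat.sub_pos_of_lt (Nat.prime_of_mem_primeFactors hp).one_lt
  have hprod : (∏ p ∈ N.primeFactors, p : ℕ) = (∏ p ∈ N.primeFactors, (p - 1 : ℕ) : ℕ) *
      ∏ p ∈ N.primeFactors, (1 + ((p - 1 : ℕ) : ℝ)⁻¹) := by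
    rw [Nat.cast_prod, Nat.cast_prod, ← prod_mul_distrib]
    refine prod_congr rfl fun p hp => ?_
    have h0 : ((p - 1 : ℕ) : ℝ) ≠ 0 := Nat.cast_ne_zero.2 (hpos p hp).ne'
    rw [mul_add, mul_one, mul_inv_cancel₀ h0]
    exact_mod_cast (Nat.sub_add_cancel (Nat.prime_of_mem_primeFactors hp).one_le).symm
  have h := congrArg (Nat.cast : ℕ → ℝ) (Nat.totient_mul_prod_primeFactors N)
  rw [Nat.cast_mul, Nat.cast_mul, hprod, mul_left_comm, mul_comm (N : ℝ)] at h
  exact mul_left_cancel₀ (Nat.cast_ne_zero.2 (prod_pos hpos).ne') h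

lemma one_add_inv_sq_le_pow_factorization {p D : ℕ} (hD : D ≠ 0) (hp : p ∈ D.primeFactors)
    (h2 : p = 2 → 4 ∣ D) :
    (1 + ((p - 1 : ℕ) : ℝ)⁻¹) ^ 2 ≤ ((p ^ D.factorization p : ℕ) : ℝ) := by
  obtain ⟨hpp, hpD, -⟩ := Nat.mem_primeFactors.1 hp
  obtain rfl | hne := eq_or_ne p 2
  · have hpow : (2 : ℕ) ^ 2 ≤ 2 ^ D.factorization 2 := Nat.pow_le_pow_right two_pos
      ((hpp.pow_dvd_iff_le_factorization hD).1 (h2 rfl))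
    calc (1 + ((2 - 1 : ℕ) : ℝ)⁻¹) ^ 2 = ((2 ^ 2 : ℕ) : ℝ) := by norm_num
      _ ≤ _ := Nat.cast_le.2 hpow
  · have hp3 : 3 ≤ p := hpp.two_le.lt_of_ne' hne
    have hinv : ((p - 1 : ℕ) : ℝ)⁻¹ ≤ 2⁻¹ :=
      inv_anti₀ two_pos (by exact_mod_cast (by omega : 2 ≤ p - 1))
    calc (1 + ((p - 1 : ℕ) : ℝ)⁻¹) ^ 2 ≤ (1 + 2⁻¹) ^ 2 := by gcongr
      _ ≤ ((3 : ℕ) : ℝ) := by norm_num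
      _ ≤ ((p ^ D.factorization p : ℕ) : ℝ) := Nat.cast_le.2 (hp3.trans
          (Nat.le_self_pow (hpp.factorization_pos_of_dvd hD hpD).ne' p))

lemma prod_one_add_inv_sq_le {D : ℕ} (hD : D ≠ 0) {S : Finset ℕ} (hS : S ⊆ D.primeFactors)
    (h2 : 2 ∈ S → 4 ∣ D) : (∏ p ∈ S, (1 + ((p - 1 : ℕ) : ℝ)⁻¹)) ^ 2 ≤ D := by
  have hdvd : ∏ p ∈ S, p ^ D.factorization p ∣ D :=
    (prod_dvd_prod_of_subset _ _ _ hS).trans (Nat.prod_factorization_pow_eq_self hD).dvd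
  calc (∏ p ∈ S, (1 + ((p - 1 : ℕ) : ℝ)⁻¹)) ^ 2
      = ∏ p ∈ S, (1 + ((p - 1 : ℕ) : ℝ)⁻¹) ^ 2 := (prod_pow _ _ _).symm
    _ ≤ ∏ p ∈ S, ((p ^ D.factorization p : ℕ) : ℝ) :=
      prod_le_prod (fun _ _ => sq_nonneg _) fun p hp =>
        one_add_inv_sq_le_pow_factorization hD (hS hp) fun h => h2 (h ▸ hp)
    _ = ((∏ p ∈ S, p ^ D.factorization p : ℕ) : ℝ) := (Nat.cast_prod _ _).symm
    _ ≤ D := Nat.cast_le.2 (Nat.le_of_dvd (Nat.pos_of_ne_zero hD) hdvd)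

lemma four_dvd_pow_sub_pow {k : ℕ} (hx : Odd x) (hy : Odd y) (hk : Even k) :
    4 ∣ x ^ k - y ^ k := by
  obtain ⟨c, rfl⟩ := hk.two_dvd
  have hsq : 2 * 2 ∣ x ^ 2 - y ^ 2 := by
    rw [Nat.sq_sub_sq]
    exact mul_dvd_mul (hx.add_odd hy).two_dvd (hx.tsub_odd hy).two_dvd
  rw [pow_mul, pow_mul]
  exact hsq.trans (Nat.sub_dvd_pow_sub_pow _ _ _)

lemma prod_filter_modEq_one_add_inv_sq_le {m n : ℕ} (hxy : y < x) (hc : x.Coprime y) (hx : Odd x)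
    (hy : Odd y) (hne : Even n) (hnm : n < m) :
    (∏ p ∈ (geomSum₂ x y m).primeFactors with x ^ n ≡ y ^ n [MOD p],
      (1 + ((p - 1 : ℕ) : ℝ)⁻¹)) ^ 2 ≤ (x : ℝ) ^ (m - n) := by
  have hlt : y ^ (m - n) < x ^ (m - n) :=
    Nat.pow_lt_pow_left hxy (Nat.sub_ne_zero_of_lt hnm)
  have hD := Nat.sub_ne_zero_of_lt hlt
  refine (prod_one_add_inv_sq_le hD (fun p hp => ?_) fun h2 => ?_).trans ?_
  · obtain ⟨hpm, hpn⟩ := mem_filter.1 hp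
    obtain ⟨hpp, hpm, -⟩ := Nat.mem_primeFactors.1 hpm
    have hpow := pow_modEq_pow_of_dvd_geomSum₂ hpm
    have hpy := not_dvd_right_of_pow_modEq_pow hpp hc (Nat.ne_zero_of_lt hnm) hpow
    rw [← rankOfApparition_dvd_iff hpp hpy] at hpow hpn
    have hsub := (rankOfApparition_dvd_iff hpp hpy _).1 (Nat.dvd_sub hpow hpn)
    exact Nat.mem_primeFactors.2 ⟨hpp, (Nat.modEq_iff_dvd' hlt.le).1 hsub.symm, hD⟩
  · have h2m := (two_dvd_geomSum₂_iff hx hy).1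
      (Nat.dvd_of_mem_primeFactors (mem_of_mem_filter 2 h2))
    exact four_dvd_pow_sub_pow hx hy (even_iff_two_dvd.2 (Nat.dvd_sub h2m hne.two_dvd))
  · exact_mod_cast Nat.sub_le _ _

end EulerProduct

section HarmonicSums

lemma sum_inv_le_harmonic {J : Finset ℕ} (hJ : ∀ j ∈ J, 0 < j) :
    ∑ j ∈ J, (j : ℝ)⁻¹ ≤ harmonic #J := by
  induction J using Finset.induction_on_max with
  | empty => simp
  | insert a s ha ih =>
    have hna : a ∉ s := fun h => (ha a h).false
    have hcard : #s + 1 ≤ a := by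
      have hsub : s ⊆ Ico 1 a := fun j hj =>
        mem_Ico.2 ⟨hJ j (mem_insert_of_mem hj), ha j hj⟩
      have hle := card_le_card hsub
      have ha0 := hJ a (mem_insert_self a s)
      rw [Nat.card_Ico] at hle
      omega
    rw [sum_insert hna, card_insert_of_notMem hna, harmonic_succ, add_comm]
    push_cast
    exact add_le_add (ih fun j hj => hJ j (mem_insert_of_mem hj))
      (inv_anti₀ (by positivity) (by exact_mod_cast hcard))

lemma sum_inv_sub_one_le_harmonic_div {d : ℕ} {P : Finset ℕ} (hP : ∀ p ∈ P, 2 ≤ p ∧ d ∣ p - 1) :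
    ∑ p ∈ P, ((p - 1 : ℕ) : ℝ)⁻¹ ≤ harmonic #P / d := by
  have hdiv : ∀ p ∈ P, d * ((p - 1) / d) + 1 = p := fun p hp => by
    have := hP p hp
    rw [Nat.mul_div_cancel' this.2]
    omega
  have hinj : Set.InjOn (fun p => (p - 1) / d) P := fun a ha b hb hab => by
    rw [← hdiv a ha, ← hdiv b hb, show (a - 1) / d = (b - 1) / d from hab]
  have hpos : ∀ j ∈ P.image (fun p => (p - 1) / d), 0 < j := by
    intro j hj
    obtain ⟨p, hp, rfl⟩ := mem_image.1 hj
    refine Nat.pos_of_ne_zero fun h0 => ?_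
    have := hdiv p hp
    rw [h0] at this
    have := (hP p hp).1
    omega
  have hsum := sum_inv_le_harmonic hpos
  rw [sum_image hinj, card_image_of_injOn hinj] at hsum
  calc ∑ p ∈ P, ((p - 1 : ℕ) : ℝ)⁻¹ = ∑ p ∈ P, ((((p - 1) / d : ℕ) : ℝ)⁻¹ / d) := by
        refine sum_congr rfl fun p hp => ?_
        nth_rw 1 [← Nat.div_mul_cancel (hP p hp).2]
        rw [Nat.cast_mul, mul_inv, div_eq_mul_inv]
    _ = (∑ p ∈ P, (((p - 1) / d : ℕ) : ℝ)⁻¹) / d := (sum_div _ _ _).symm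
    _ ≤ harmonic #P / d := by gcongr

lemma one_add_log_div_self_antitoneOn :
    AntitoneOn (fun u : ℝ => (1 + Real.log u) / u) (Set.Ici 1) := by
  intro u (hu : 1 ≤ u) v (hv : 1 ≤ v) huv
  have hu0 : 0 < u := by linarith
  have hv0 : 0 < v := by linarith
  have hratio : Real.log v - Real.log u ≤ v / u - 1 := by
    rw [← Real.log_div hv0.ne' hu0.ne']
    exact Real.log_le_sub_one_of_pos (div_pos hv0 hu0)
  have hscale : v / u - 1 ≤ (v / u - 1) * (1 + Real.log u) :=
    le_mul_of_one_le_right (sub_nonneg.2 ((one_le_div hu0).2 huv))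
      (le_add_of_nonneg_right (Real.log_nonneg hu))
  rw [div_le_iff₀ hv0]
  calc 1 + Real.log v ≤ v / u * (1 + Real.log u) := by linarith
    _ = (1 + Real.log u) / u * v := by ring

lemma one_add_logb_two_mul_one_add_log_le {u : ℝ} (hu : 1 ≤ u) :
    (1 + Real.logb 2 u) * (1 + Real.log u) ≤ 2 * u := by
  obtain ⟨t, rfl⟩ : ∃ t, u = Real.exp t := ⟨_, (Real.exp_log (by linarith)).symm⟩
  have ht : 0 ≤ t := Real.one_le_exp_iff.1 hu
  have hlogb : Real.logb 2 (Real.exp t) ≤ 3 / 2 * t := by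
    have := Real.log_two_gt_d9
    rw [Real.logb, Real.log_exp, div_le_iff₀ (by linarith)]
    nlinarith
  have hexp : 1 + t + t ^ 2 / 2 + t ^ 3 / 6 ≤ Real.exp t := by
    simpa [sum_range_succ, Nat.factorial] using Real.sum_le_exp_of_nonneg ht 4
  have hcubic : (1 + 3 / 2 * t) * (1 + t) ≤ 2 * (1 + t + t ^ 2 / 2 + t ^ 3 / 6) := by
    nlinarith [mul_nonneg ht (sq_nonneg (t - 3 / 2)), sq_nonneg (t - 5 / 4)]
  calc (1 + Real.logb 2 (Real.exp t)) * (1 + Real.log (Real.exp t))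
      ≤ (1 + 3 / 2 * t) * (1 + t) := by rw [Real.log_exp]; gcongr
    _ ≤ 2 * Real.exp t := by linarith

lemma natCast_le_one_add_logb_two {b : ℕ} {u : ℝ} (h : 2 ^ (b - 1) ≤ u) :
    (b : ℝ) ≤ 1 + Real.logb 2 u := by
  have hlogb : ((b - 1 : ℕ) : ℝ) ≤ Real.logb 2 u := by
    rw [Real.le_logb_iff_rpow_le one_lt_two (lt_of_lt_of_le (by positivity) h), Real.rpow_natCast]
    exact h
  have hb : (b : ℝ) ≤ 1 + ((b - 1 : ℕ) : ℝ) := by exact_mod_cast (by omega : b ≤ 1 + (b - 1))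
  linarith

lemma sum_inv_sub_one_le_of_card_le {q : ℕ} {P : Finset ℕ} {L : ℝ} (hne : P.Nonempty)
    (hP : ∀ p ∈ P, 2 ≤ p ∧ 2 * q ∣ p - 1) (hcard : (#P : ℝ) ≤ q * L / 2) :
    ∑ p ∈ P, ((p - 1 : ℕ) : ℝ)⁻¹ ≤ L / 4 * ((1 + Real.log (q * L / 2)) / (q * L / 2)) := by
  have hP0 : (0 : ℝ) < #P := Nat.cast_pos.2 hne.card_pos
  have hqL : (q : ℝ) * L ≠ 0 := by linarith
  have hq0 := left_ne_zero_of_mul hqL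
  have hL0 := right_ne_zero_of_mul hqL
  calc ∑ p ∈ P, ((p - 1 : ℕ) : ℝ)⁻¹ ≤ harmonic #P / (2 * q : ℕ) :=
        sum_inv_sub_one_le_harmonic_div hP
    _ ≤ (1 + Real.log #P) / (2 * q : ℕ) := by gcongr; exact harmonic_le_one_add_log _
    _ ≤ (1 + Real.log (q * L / 2)) / (2 * q : ℕ) := by gcongr
    _ = L / 4 * ((1 + Real.log (q * L / 2)) / (q * L / 2)) := by push_cast; field_simp; ring

lemma sum_sum_inv_sub_one_le {B : Finset ℕ} {P : ℕ → Finset ℕ} {L : ℝ} (hL : 0 ≤ L)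
    (hP : ∀ q ∈ B, ∀ p ∈ P q, 2 ≤ p ∧ 2 * q ∣ p - 1)
    (hcard : ∀ q ∈ B, 2 ^ (#B - 1) ≤ #(P q)) (hle : ∀ q ∈ B, (#(P q) : ℝ) ≤ q * L / 2) :
    ∑ q ∈ B, ∑ p ∈ P q, ((p - 1 : ℕ) : ℝ)⁻¹ ≤ L / 2 := by
  rcases B.eq_empty_or_nonempty with rfl | hne
  · rw [sum_empty]
    positivity
  have hpow : ∀ q ∈ B, 2 ^ (#B - 1) ≤ q * L / 2 := fun q hq =>
    le_trans (by exact_mod_cast hcard q hq) (hle q hq)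
  have hone : ∀ q ∈ B, 1 ≤ q * L / 2 := fun q hq => (one_le_pow₀ one_le_two).trans (hpow q hq)
  obtain ⟨q₀, hq₀, hmin⟩ := B.exists_min_image id hne
  have hu := hone q₀ hq₀
  set u : ℝ := q₀ * L / 2
  have hterm : ∀ q ∈ B, ∑ p ∈ P q, ((p - 1 : ℕ) : ℝ)⁻¹ ≤ L / 4 * ((1 + Real.log u) / u) := by
    intro q hq
    refine (sum_inv_sub_one_le_of_card_le (card_pos.1 (Nat.two_pow_pos _ |>.trans_le (hcard q hq)))
      (hP q hq) (hle q hq)).trans ?_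
    have hanti := one_add_log_div_self_antitoneOn hu (hone q hq)
      (show (q₀ : ℝ) * L / 2 ≤ q * L / 2 by gcongr; exact hmin q hq)
    gcongr
  have hlog := Real.log_nonneg hu
  calc ∑ q ∈ B, ∑ p ∈ P q, ((p - 1 : ℕ) : ℝ)⁻¹
      ≤ #B * (L / 4 * ((1 + Real.log u) / u)) := by
        rw [← nsmul_eq_mul]
        exact sum_le_card_nsmul _ _ _ hterm
    _ ≤ (1 + Real.logb 2 u) * (L / 4 * ((1 + Real.log u) / u)) := by
        gcongr
        exact natCast_le_one_add_logb_two (hpow q₀ hq₀)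
    _ = L / 4 * ((1 + Real.logb 2 u) * (1 + Real.log u) / u) := by ring
    _ ≤ L / 4 * 2 := by
        gcongr
        rw [div_le_iff₀ (by linarith)]
        exact one_add_logb_two_mul_one_add_log_le hu
    _ = L / 2 := by ring

end HarmonicSums

section EscapingPrimes

variable {m n q : ℕ}

lemma odd_of_mem_escapingPrimes (hx : Odd x) (hy : Odd y) (hq : q ∈ escapingPrimes x y m n) :
    Odd q := by
  obtain ⟨hqm, -, hqQ⟩ := mem_escapingPrimes.1 hq
  refine (Nat.prime_of_mem_primeFactors hqm).eq_two_or_odd'.resolve_left ?_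
  rintro rfl
  exact hqQ ((two_dvd_geomSum₂_iff hx hy).2 (Nat.dvd_of_mem_primeFactors hqm))

lemma two_mul_dvd_sub_one_of_mem_primeFactorsOneMod {N p : ℕ} (hq : Odd q) (hq1 : q ≠ 1)
    (hp : p ∈ primeFactorsOneMod q N) : 2 * q ∣ p - 1 := by
  obtain ⟨hpN, hqp⟩ := mem_primeFactorsOneMod.1 hp
  have hodd : Odd p := (Nat.prime_of_mem_primeFactors hpN).eq_two_or_odd'.resolve_left <| by
    rintro rfl
    exact hq1 (Nat.dvd_one.1 hqp)
  exact (Nat.coprime_two_left.2 hq).mul_dvd_of_dvd_of_dvd (hodd.tsub_odd odd_one).two_dvd hqp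

lemma natCast_le_mul_log_div_two {X A : ℕ} (hq : 3 ≤ q)
    (h : q ^ A ≤ X ^ ((q - 1) / 2)) : (A : ℝ) ≤ q * Real.log X / 2 := by
  have hq3 : (3 : ℝ) ≤ q := by exact_mod_cast hq
  have hlogq : 1 ≤ Real.log q := by
    rw [Real.le_log_iff_exp_le (by linarith)]
    exact Real.exp_one_lt_three.le.trans hq3
  have hlog : A * Real.log q ≤ ((q - 1) / 2 : ℕ) * Real.log X := by
    rw [← Real.log_pow, ← Real.log_pow]
    exact Real.log_le_log (by positivity) (by exact_mod_cast h)
  have hhalf : (((q - 1) / 2 : ℕ) : ℝ) ≤ q / 2 := by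
    rw [le_div_iff₀ two_pos]
    exact_mod_cast (by omega : (q - 1) / 2 * 2 ≤ q)
  calc (A : ℝ) ≤ A * Real.log q := le_mul_of_one_le_right (Nat.cast_nonneg A) hlogq
    _ ≤ q / 2 * Real.log X :=
        hlog.trans (mul_le_mul_of_nonneg_right hhalf (Real.log_natCast_nonneg X))
    _ = q * Real.log X / 2 := by ring

lemma sum_escapingPrimes_le (hxy : y < x) (hc : x.Coprime y) (hx : Odd x) (hy : Odd y)
    (hn : n ≠ 0) (hnm : n < m)
    (hdvd : ∀ q ∈ escapingPrimes x y m n,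
      q ^ #(primeFactorsOneMod q (geomSum₂ x y m)) ∣ x ^ n - y ^ n) :
    ∑ q ∈ escapingPrimes x y m n, ∑ p ∈ primeFactorsOneMod q (geomSum₂ x y m),
      ((p - 1 : ℕ) : ℝ)⁻¹ ≤ Real.log (x ^ (m - n) : ℕ) / 2 := by
  have hprime : ∀ q ∈ escapingPrimes x y m n, q.Prime := fun q hq =>
    Nat.prime_of_mem_primeFactors (mem_escapingPrimes.1 hq).1
  have hodd : ∀ q ∈ escapingPrimes x y m n, Odd q := fun q hq => odd_of_mem_escapingPrimes hx hy hq
  refine sum_sum_inv_sub_one_le (Real.log_natCast_nonneg _) (fun q hq p hp => ⟨?_, ?_⟩)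
    (fun q hq => ?_) fun q hq => ?_
  · exact (Nat.prime_of_mem_primeFactors (mem_primeFactorsOneMod.1 hp).1).two_le
  · exact two_mul_dvd_sub_one_of_mem_primeFactorsOneMod (hodd q hq) (hprime q hq).ne_one hp
  · exact two_pow_card_sub_one_le_card_primeFactorsOneMod hy.pos hxy hc (Nat.zero_lt_of_lt hnm)
      (filter_subset _ _) (fun r hr => (mem_escapingPrimes.1 hr).2.2) hq
  · have := Fact.mk (hprime q hq)
    refine natCast_le_mul_log_div_two ?_
      (pow_le_pow_of_pow_dvd_pow_sub_pow (hodd q hq) hxy hc hx hy hn hnm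
        (mem_escapingPrimes.1 hq).2.1.le (hdvd q hq))
    obtain ⟨k, rfl⟩ := hodd q hq
    have := (hprime _ hq).two_le
    omega

end EscapingPrimes

lemma sum_le_sum_sum_of_forall_exists_mem {ι κ : Type*} {f : κ → ℝ} (hf : ∀ p, 0 ≤ f p)
    {S : Finset κ} {B : Finset ι} {P : ι → Finset κ} (h : ∀ p ∈ S, ∃ q ∈ B, p ∈ P q) :
    ∑ p ∈ S, f p ≤ ∑ q ∈ B, ∑ p ∈ P q, f p := by
  classical
  rcases S.eq_empty_or_nonempty with rfl | ⟨p₀, hp₀⟩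
  · exact sum_empty.trans_le (sum_nonneg fun q _ => sum_nonneg fun p _ => hf p)
  have : Nonempty ι := ⟨(h p₀ hp₀).choose⟩
  choose! g hgB hgP using h
  rw [← sum_fiberwise_of_maps_to hgB]
  refine sum_le_sum fun q _ => sum_le_sum_of_subset_of_nonneg (fun p hp => ?_) fun p _ _ => hf p
  obtain ⟨hpS, rfl⟩ := mem_filter.1 hp
  exact hgP p hpS

lemma prod_one_add_le_of_sq_le_of_sum_le {ι : Type*} {s : Finset ι} {f : ι → ℝ}
    {r : ι → Prop} [DecidablePred r] {X : ℝ} (hf : ∀ i, 0 ≤ f i)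
    (hprod : (∏ i ∈ s with r i, (1 + f i)) ^ 2 ≤ X)
    (hsum : ∑ i ∈ s with ¬ r i, f i ≤ Real.log X / 2) : ∏ i ∈ s, (1 + f i) ≤ X := by
  have hpos : 0 < ∏ i ∈ s with r i, (1 + f i) := prod_pos fun i _ => by linarith [hf i]
  have hX : 0 < X := (pow_pos hpos 2).trans_le hprod
  rw [← prod_filter_mul_prod_filter_not s r]
  calc (∏ i ∈ s with r i, (1 + f i)) * ∏ i ∈ s with ¬ r i, (1 + f i)
      ≤ √X * Real.exp (Real.log X / 2) := by
        gcongr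
        · exact prod_nonneg fun i _ => by linarith [hf i]
        · exact Real.le_sqrt_of_sq_le hprod
        · exact (Real.prod_one_add_le_exp_sum _ hf).trans (Real.exp_le_exp.2 hsum)
    _ = X := by rw [Real.exp_half, Real.exp_log hX, Real.mul_self_sqrt hX.le]

lemma odd_and_even_of_totient_geomSum₂_dvd {m n : ℕ} (hc : x.Coprime y) (hn : n ≠ 0)
    (hm : 2 < geomSum₂ x y m) (hdvd : (geomSum₂ x y m).totient ∣ geomSum₂ x y n) :
    Odd x ∧ Odd y ∧ Even n := by
  have h2 : 2 ∣ geomSum₂ x y n := (Nat.totient_even hm).two_dvd.trans hdvd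
  obtain ⟨hx, hy⟩ := odd_of_two_dvd_geomSum₂ hc hn h2
  exact ⟨hx, hy, even_iff_two_dvd.2 ((two_dvd_geomSum₂_iff hx hy).1 h2)⟩

lemma pow_card_primeFactorsOneMod_dvd_pow_sub_pow {m n q : ℕ} (hxy : y < x) (hm : 0 < m)
    (hdvd : (geomSum₂ x y m).totient ∣ geomSum₂ x y n) (hq : q.Prime) :
    q ^ #(primeFactorsOneMod q (geomSum₂ x y m)) ∣ x ^ n - y ^ n := by
  have hQ := (geomSum₂_pos (y := y) (Nat.zero_lt_of_lt hxy) hm).ne'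
  calc q ^ #(primeFactorsOneMod q (geomSum₂ x y m))
      ∣ q ^ (padicValNat q (geomSum₂ x y m) - 1 + #(primeFactorsOneMod q (geomSum₂ x y m))) :=
        pow_dvd_pow q (Nat.le_add_left _ _)
    _ ∣ (geomSum₂ x y m).totient := pow_padicValNat_sub_one_add_card_dvd_totient hq hQ
    _ ∣ geomSum₂ x y n := hdvd
    _ ∣ x ^ n - y ^ n := Dvd.intro _ (geom_sum₂_mul_of_ge hxy.le n)

lemma le_of_totient_geomSum₂_dvd_of_coprime {m n : ℕ} (hy : 0 < y) (hxy : y < x)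
    (hc : x.Coprime y) (hn : n ≠ 0) (hdvd : (geomSum₂ x y m).totient ∣ geomSum₂ x y n) :
    m ≤ n := by
  by_contra! hnm
  have hx := Nat.zero_lt_of_lt hxy
  have hm := Nat.zero_lt_of_lt hnm
  have hlt := pow_mul_geomSum₂_lt_geomSum₂ hx hy hnm
  have hQm2 : 2 < geomSum₂ x y m :=
    calc 2 ≤ x := by omega
      _ ≤ x ^ (m - n) := Nat.le_self_pow (Nat.sub_ne_zero_of_lt hnm) x
      _ ≤ x ^ (m - n) * geomSum₂ x y n :=
        Nat.le_mul_of_pos_right _ (geomSum₂_pos hx (Nat.pos_of_ne_zero hn))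
      _ < geomSum₂ x y m := hlt
  obtain ⟨hxo, hyo, hne⟩ := odd_and_even_of_totient_geomSum₂_dvd hc hn hQm2 hdvd
  have hprod := prod_filter_modEq_one_add_inv_sq_le hxy hc hxo hyo hne hnm
  have hsum := (sum_le_sum_sum_of_forall_exists_mem
    (fun p : ℕ => inv_nonneg.2 (Nat.cast_nonneg (p - 1))) fun p hp =>
      exists_mem_escapingPrimes hxy hc hm.ne' hn hdvd (mem_filter.1 hp).1
        (mem_filter.1 hp).2).trans
    (sum_escapingPrimes_le hxy hc hxo hyo hn hnm fun q hq =>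
      pow_card_primeFactorsOneMod_dvd_pow_sub_pow hxy hm hdvd
        (Nat.prime_of_mem_primeFactors (mem_escapingPrimes.1 hq).1))
  rw [Nat.cast_pow] at hsum
  have hle : geomSum₂ x y m ≤ (geomSum₂ x y m).totient * x ^ (m - n) := by
    have := mul_le_mul_of_nonneg_left
      (prod_one_add_le_of_sq_le_of_sum_le (fun p => inv_nonneg.2 (Nat.cast_nonneg (p - 1)))
        hprod hsum) (Nat.cast_nonneg (α := ℝ) (geomSum₂ x y m).totient)
    rw [totient_mul_prod_one_add_inv] at this
    exact_mod_cast this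
  have hQ := Nat.le_of_dvd (geomSum₂_pos hx (Nat.pos_of_ne_zero hn)) hdvd
  exact hlt.not_ge (hle.trans ((Nat.mul_le_mul_right _ hQ).trans_eq (mul_comm _ _)))

lemma totient_pow_succ_mul (g j M : ℕ) :
    (g ^ (j + 1) * M).totient = g ^ j * (g * M).totient := by
  rcases Nat.eq_zero_or_pos g with rfl | hg
  · simp
  induction j with
  | zero => simp
  | succ j ih =>
    have h := Nat.totient_gcd_mul_totient_mul g (g ^ (j + 1) * M)
    rw [Nat.gcd_eq_left ((dvd_pow_self g j.succ_ne_zero).mul_right M), ih] at h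
    rw [pow_succ' g (j + 1), mul_assoc]
    exact Nat.eq_of_mul_eq_mul_left (Nat.totient_pos.2 hg) (by rw [h]; ring)

lemma le_of_totient_geomSum₂_dvd {m n : ℕ} (hy : 0 < y) (hxy : y < x) (hn : n ≠ 0)
    (hdvd : (geomSum₂ x y m).totient ∣ geomSum₂ x y n) : m ≤ n := by
  by_contra! hnm
  obtain ⟨g, a, b, hg, hc, rfl, rfl⟩ := Nat.exists_coprime' (Nat.gcd_pos_of_pos_right x hy)
  have hb : 0 < b := Nat.pos_of_mul_pos_right hy
  have hba : b < a := lt_of_mul_lt_mul_right hxy hg.le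
  have hexp : m - 1 = m - 2 + 1 := by omega
  rw [mul_comm a, mul_comm b, geomSum₂_mul_mul, geomSum₂_mul_mul, hexp,
    totient_pow_succ_mul] at hdvd
  have hcancel : (g * geomSum₂ a b m).totient ∣ geomSum₂ a b n :=
    Nat.dvd_of_mul_dvd_mul_left (Nat.pow_pos hg)
      ((Nat.mul_dvd_mul_right (pow_dvd_pow g (by omega : n - 1 ≤ m - 2)) _).trans hdvd)
  exact hnm.not_ge (le_of_totient_geomSum₂_dvd_of_coprime hb hba hc hn
    ((Nat.totient_dvd_of_dvd (dvd_mul_left _ _)).trans hcancel))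

theorem phi_eq_quotient (x y m n : ℕ) (hx : 0 < x) (hy : 0 < y)
    (hm : 0 < m) (hn : 0 < n) (hxy : y < x)
    (heq : Nat.totient ((x ^ m - y ^ m) / (x - y)) = (x ^ n - y ^ n) / (x - y)) :
    m = 1 ∧ n = 1 := by
  rw [pow_sub_pow_div_sub_eq_geomSum₂ hxy, pow_sub_pow_div_sub_eq_geomSum₂ hxy] at heq
  have hmono := geomSum₂_strictMono hx hy
  have hmn : m ≤ n := le_of_totient_geomSum₂_dvd hy hxy hn.ne' heq.dvd
  obtain rfl : m = 1 := by
    by_contra hm1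
    have hQ : 1 < geomSum₂ x y m :=
      (geomSum₂_one x y).symm.trans_lt (hmono (Nat.lt_of_le_of_ne hm (Ne.symm hm1)))
    exact (Nat.totient_lt _ hQ).not_ge (heq ▸ hmono.monotone hmn)
  rw [geomSum₂_one, Nat.totient_one, ← geomSum₂_one x y] at heq
  exact ⟨rfl, (hmono.injective heq).symm⟩
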